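/- Let ε > 0 and let (u, A) be a periodic configuration that is a solution of the Yang–Mills–Higgs equations and is stable. If u is not identically zero, then (u, A) satisfies the vortex equations (σ₊ ≡ 0 and F ≡ h on ℝ²) or the anti-vortex equations (σ₋ ≡ 0 and F ≡ −h on ℝ²). (Main Theorem, case of the flat torus with trivial bundle.) -/

import Mathlib

open MeasureTheory Complex

noncomputable section

/-- Partial derivative in the first coordinate direction. -/
def pd1 {E : Type*} [NormedAddCommGroup E] [NormedSpace ℝ E] (f : ℝ × ℝ → E) (x : ℝ × ℝ) : E :=
  fderiv ℝ f x (1, 0)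

/-- Partial derivative in the second coordinate direction. -/
def pd2 {E : Type*} [NormedAddCommGroup E] [NormedSpace ℝ E] (f : ℝ × ℝ → E) (x : ℝ × ℝ) : E :=
  fderiv ℝ f x (0, 1)

/-- First covariant derivative `D₁f = ∂₁f − iA₁f`. -/
def D1 (A1 : ℝ × ℝ → ℝ) (f : ℝ × ℝ → ℂ) (x : ℝ × ℝ) : ℂ :=
  pd1 f x - Complex.I * (A1 x) * f x

/-- Second covariant derivative `D₂f = ∂₂f − iA₂f`. -/
def D2 (A2 : ℝ × ℝ → ℝ) (f : ℝ × ℝ → ℂ) (x : ℝ × ℝ) : ℂ :=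
  pd2 f x - Complex.I * (A2 x) * f x

/-- Curvature function `F = ∂₁A₂ − ∂₂A₁`. -/
def curv (A1 A2 : ℝ × ℝ → ℝ) (x : ℝ × ℝ) : ℝ := pd1 A2 x - pd2 A1 x

/-- `h = (1 − |u|²)/(2ε²)`. -/
def hfun (ε : ℝ) (u : ℝ × ℝ → ℂ) (x : ℝ × ℝ) : ℝ := (1 - ‖u x‖ ^ 2) / (2 * ε ^ 2)

/-- `σ₊ = D₁u + iD₂u`. -/
def sigP (u : ℝ × ℝ → ℂ) (A1 A2 : ℝ × ℝ → ℝ) (x : ℝ × ℝ) : ℂ :=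
  D1 A1 u x + Complex.I * D2 A2 u x

/-- `σ₋ = D₁u − iD₂u`. -/
def sigM (u : ℝ × ℝ → ℂ) (A1 A2 : ℝ × ℝ → ℝ) (x : ℝ × ℝ) : ℂ :=
  D1 A1 u x - Complex.I * D2 A2 u x

/-- The Yang--Mills--Higgs energy over the fundamental domain `[0,1]²`. -/
def energy (ε : ℝ) (u : ℝ × ℝ → ℂ) (A1 A2 : ℝ × ℝ → ℝ) : ℝ :=
  ∫ x in Set.Icc (0:ℝ) 1 ×ˢ Set.Icc (0:ℝ) 1,
    (ε ^ 2 * curv A1 A2 x ^ 2 + ‖D1 A1 u x‖ ^ 2 + ‖D2 A2 u x‖ ^ 2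
      + (1 - ‖u x‖ ^ 2) ^ 2 / (4 * ε ^ 2))

/-- `ℤ²`-periodicity. -/
def Periodic2 {E : Type*} (f : ℝ × ℝ → E) : Prop :=
  ∀ x : ℝ × ℝ, f (x.1 + 1, x.2) = f x ∧ f (x.1, x.2 + 1) = f x

/-- The Yang--Mills--Higgs equations on all of `ℝ²`. -/
def IsYMH (ε : ℝ) (u : ℝ × ℝ → ℂ) (A1 A2 : ℝ × ℝ → ℝ) : Prop :=
  (∀ x, -(D1 A1 (D1 A1 u) x + D2 A2 (D2 A2 u) x) = (hfun ε u x : ℂ) * u x) ∧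
  (∀ x, ε ^ 2 * pd2 (curv A1 A2) x = ((starRingEnd ℂ) (u x) * D1 A1 u x).im) ∧
  (∀ x, ε ^ 2 * pd1 (curv A1 A2) x = -((starRingEnd ℂ) (u x) * D2 A2 u x).im)

/-- The Yang--Mills--Higgs equations on an open set `U ⊆ ℝ²`. -/
def IsYMHOn (ε : ℝ) (u : ℝ × ℝ → ℂ) (A1 A2 : ℝ × ℝ → ℝ) (U : Set (ℝ × ℝ)) : Prop :=
  (∀ x ∈ U, -(D1 A1 (D1 A1 u) x + D2 A2 (D2 A2 u) x) = (hfun ε u x : ℂ) * u x) ∧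
  (∀ x ∈ U, ε ^ 2 * pd2 (curv A1 A2) x = ((starRingEnd ℂ) (u x) * D1 A1 u x).im) ∧
  (∀ x ∈ U, ε ^ 2 * pd1 (curv A1 A2) x = -((starRingEnd ℂ) (u x) * D2 A2 u x).im)

/-- Stability: nonnegative second variation of the energy along all smooth periodic
variations of the section and the connection. -/
def Stable (ε : ℝ) (u : ℝ × ℝ → ℂ) (A1 A2 : ℝ × ℝ → ℝ) : Prop :=
  ∀ v : ℝ × ℝ → ℂ, ∀ a1 a2 : ℝ × ℝ → ℝ,
    ContDiff ℝ (⊤ : ℕ∞) v → Periodic2 v → ContDiff ℝ (⊤ : ℕ∞) a1 → Periodic2 a1 →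
    ContDiff ℝ (⊤ : ℕ∞) a2 → Periodic2 a2 →
    0 ≤ iteratedDeriv 2 (fun t : ℝ =>
      energy ε (fun x => u x + t • v x)
        (fun x => A1 x + t * a1 x) (fun x => A2 x + t * a2 x)) 0

/-!
For an orientation `s = ±1` write `σ_s = D₁u + s i D₂u` and `φ_s = sF - h`. The Yang–Mills–Higgs
equations give `(D₁ - s i D₂) σ_s = φ_s u`, express `∇φ_s` through `ū σ_s`, and hence imply
`ε² Δφ_s = |u|² φ_s + |σ_s|²`. By the strong maximum principle on the torus, either `φ_s < 0`
everywhere or `φ_s` is a constant `≥ 0`; since `u ≢ 0`, the latter forces `φ_s ≡ 0` and `σ_s ≡ 0`.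

Since the bundle is trivial, the energy equals `∫ |σ_r|² + ε² φ_r²` for both `r = ±1`. For `c ∈ ℂ`,
the variation `v = c σ_s`, `a = (Im c, s Re c) φ_s` solves the equations `σ_r = 0`, `φ_r = 0`
linearized at `(u, A)`, with `r = -s`, so its second variation has no first-order squares. Adding
the second variations for `c = 1` and `c = i` leaves a positive multiple of `∫ φ_{-s} |σ_s|²`,
which stability makes nonnegative. If `φ₋ < 0` everywhere, this forces `σ₊ ≡ 0`, so `φ₊ u ≡ 0`,
which excludes `φ₊ < 0`.
-/

open scoped ComplexConjugate ContDiff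

/-! ### Directional derivatives -/

section DirectionalDerivative

variable {V E : Type*} [NormedAddCommGroup V] [NormedSpace ℝ V]
  [NormedAddCommGroup E] [NormedSpace ℝ E]

lemma contDiff_fderiv_apply_const {m n : ℕ∞ω} {f : V → E} (hf : ContDiff ℝ n f)
    (hmn : m + 1 ≤ n) (e : V) : ContDiff ℝ m fun x => fderiv ℝ f x e :=
  (hf.fderiv_right hmn).clm_apply contDiff_const

lemma fderiv_fderiv_apply_comm {f : V → E} {x : V} (hf : ContDiffAt ℝ 2 f x) (d e : V) :
    fderiv ℝ (fun y => fderiv ℝ f y e) x d = fderiv ℝ (fun y => fderiv ℝ f y d) x e := by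
  have hdiff : DifferentiableAt ℝ (fderiv ℝ f) x :=
    (hf.fderiv_right (m := 1) one_add_one_eq_two.le).differentiableAt one_ne_zero
  have hsymm : IsSymmSndFDerivAt ℝ f x := hf.isSymmSndFDerivAt (by simp)
  simpa [fderiv_clm_apply hdiff (differentiableAt_const _)] using hsymm d e

lemma hasDerivAt_comp_add_smul {f : V → E} (hf : Differentiable ℝ f) (x e : V) (t : ℝ) :
    HasDerivAt (fun s : ℝ => f (x + s • e)) (fderiv ℝ f (x + t • e) e) t := by
  have hline : HasDerivAt (fun s : ℝ => x + s • e) e t := by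
    simpa using ((hasDerivAt_id t).smul_const e).const_add x
  exact (hf _).hasFDerivAt.comp_hasDerivAt t hline

lemma deriv_deriv_nonneg_of_isLocalMin {φ : ℝ → ℝ} {a : ℝ} (hφ : ContinuousAt φ a)
    (hmin : IsLocalMin φ a) : 0 ≤ deriv (deriv φ) a := by
  by_contra! hneg
  have hmax : IsLocalMax φ a := isLocalMax_of_deriv_deriv_neg hneg hmin.deriv_eq_zero hφ
  have hconst : φ =ᶠ[nhds a] fun _ => φ a := by
    filter_upwards [hmin, hmax] with y hle hge using le_antisymm hge hle
  have hzero : deriv (deriv φ) a = 0 := by simpa using hconst.deriv.deriv_eq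
  exact hneg.ne hzero

lemma fderiv_fderiv_apply_nonneg_of_isLocalMin {f : V → ℝ} {x : V} (hf : ContDiff ℝ 2 f)
    (hmin : IsLocalMin f x) (e : V) : 0 ≤ fderiv ℝ (fun y => fderiv ℝ f y e) x e := by
  have hf' : ContDiff ℝ 1 fun y => fderiv ℝ f y e :=
    contDiff_fderiv_apply_const hf one_add_one_eq_two.le e
  have hderiv : deriv (fun s : ℝ => f (x + s • e)) = fun s => fderiv ℝ f (x + s • e) e :=
    funext fun s => (hasDerivAt_comp_add_smul (hf.differentiable two_ne_zero) x e s).deriv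
  have hderiv₂ := (hasDerivAt_comp_add_smul (hf'.differentiable one_ne_zero) x e 0).deriv
  have hline : Continuous fun s : ℝ => x + s • e := by fun_prop
  have hx : x + (0 : ℝ) • e = x := by simp
  have hmin₀ : IsLocalMin f (x + (0 : ℝ) • e) := by rwa [hx]
  have hmin' : IsLocalMin (fun s : ℝ => f (x + s • e)) 0 :=
    IsMinFilter.comp_tendsto hmin₀ hline.continuousAt
  have hnonneg := deriv_deriv_nonneg_of_isLocalMin (hf.continuous.comp hline).continuousAt hmin'
  rwa [Function.comp_def, hderiv, hderiv₂, hx] at hnonneg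

end DirectionalDerivative

/-! ### The strong maximum principle -/

section StrongMaximumPrinciple

/-- The flat Laplacian on the plane. -/
def lap (f : ℝ × ℝ → ℝ) (x : ℝ × ℝ) : ℝ := pd1 (pd1 f) x + pd2 (pd2 f) x

/-- The squared Euclidean distance; the metric of `ℝ × ℝ` in Mathlib is the sup metric. -/
def sqDist (p x : ℝ × ℝ) : ℝ := (x.1 - p.1) ^ 2 + (x.2 - p.2) ^ 2

variable {f w c : ℝ × ℝ → ℝ} {p x : ℝ × ℝ}

lemma lap_eq (f : ℝ × ℝ → ℝ) (x : ℝ × ℝ) :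
    lap f x = fderiv ℝ (fun y => fderiv ℝ f y (1, 0)) x (1, 0)
      + fderiv ℝ (fun y => fderiv ℝ f y (0, 1)) x (0, 1) :=
  rfl

lemma lap_const (m : ℝ) (x : ℝ × ℝ) : lap (fun _ => m) x = 0 := by
  simp [lap_eq]

lemma lap_const_sub (m : ℝ) (f : ℝ × ℝ → ℝ) (x : ℝ × ℝ) :
    lap (fun y => m - f y) x = -lap f x := by
  simp [lap_eq, fderiv_const_sub, add_comm]

lemma lap_sub_const (f : ℝ × ℝ → ℝ) (m : ℝ) (x : ℝ × ℝ) :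
    lap (fun y => f y - m) x = lap f x := by
  simp [lap_eq, fderiv_sub_const]

lemma lap_sub_const_mul (hf : ContDiff ℝ 2 f) (hw : ContDiff ℝ 2 w) (m : ℝ) (x : ℝ × ℝ) :
    lap (fun y => f y - m * w y) x = lap f x - m * lap w x := by
  have hfd := hf.differentiable two_ne_zero
  have hwd := hw.differentiable two_ne_zero
  have hf₂ (e : ℝ × ℝ) : Differentiable ℝ fun y => fderiv ℝ f y e :=
    (contDiff_fderiv_apply_const hf one_add_one_eq_two.le e).differentiable one_ne_zero
  have hw₂ (e : ℝ × ℝ) : Differentiable ℝ fun y => fderiv ℝ w y e :=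
    (contDiff_fderiv_apply_const hw one_add_one_eq_two.le e).differentiable one_ne_zero
  have hfst (y e : ℝ × ℝ) : fderiv ℝ (fun y => f y - m * w y) y e
      = fderiv ℝ f y e - m * fderiv ℝ w y e := by
    rw [fderiv_fun_sub (hfd y) ((hwd y).const_mul m), fderiv_const_mul (hwd y)]
    rfl
  have hsnd (e : ℝ × ℝ) : fderiv ℝ (fun y => fderiv ℝ f y e - m * fderiv ℝ w y e) x e
      = fderiv ℝ (fun y => fderiv ℝ f y e) x e - m * fderiv ℝ (fun y => fderiv ℝ w y e) x e := by
    rw [fderiv_fun_sub (hf₂ e x) ((hw₂ e x).const_mul m), fderiv_const_mul (hw₂ e x)]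
    rfl
  simp only [lap_eq, hfst, hsnd]
  ring

lemma lap_nonneg_of_isLocalMin (hf : ContDiff ℝ 2 f) (hmin : IsLocalMin f x) : 0 ≤ lap f x :=
  add_nonneg (fderiv_fderiv_apply_nonneg_of_isLocalMin hf hmin (1, 0))
    (fderiv_fderiv_apply_nonneg_of_isLocalMin hf hmin (0, 1))

lemma nonneg_of_lap_neg_of_neg {K U : Set (ℝ × ℝ)} (hK : IsCompact K) (hU : IsOpen U)
    (hUK : U ⊆ K) (hf : ContDiff ℝ 2 f) (hbdry : ∀ y ∈ K \ U, 0 ≤ f y)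
    (hlap : ∀ y ∈ U, f y < 0 → lap f y < 0) (hx : x ∈ K) : 0 ≤ f x := by
  obtain ⟨q, hqK, hq⟩ := hK.exists_isMinOn ⟨x, hx⟩ hf.continuous.continuousOn
  refine le_trans ?_ (hq hx)
  by_contra! hneg
  have hqU : q ∈ U := by_contra fun hqU => hneg.not_ge (hbdry q ⟨hqK, hqU⟩)
  have hmin : IsLocalMin f q := hq.isLocalMin (Filter.mem_of_superset (hU.mem_nhds hqU) hUK)
  exact (hlap q hqU hneg).not_ge (lap_nonneg_of_isLocalMin hf hmin)

lemma sqDist_nonneg (p x : ℝ × ℝ) : 0 ≤ sqDist p x := by unfold sqDist; positivity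

lemma contDiff_sqDist {n : ℕ∞ω} (p : ℝ × ℝ) : ContDiff ℝ n (sqDist p) := by
  unfold sqDist; fun_prop

lemma dist_le_of_sqDist_le_sq {s : ℝ} (hs : 0 ≤ s) (h : sqDist p x ≤ s ^ 2) : dist x p ≤ s := by
  unfold sqDist at h
  rw [Prod.dist_eq, Real.dist_eq, Real.dist_eq]
  exact max_le (abs_le_of_sq_le_sq (by nlinarith [sq_nonneg (x.2 - p.2)]) hs)
    (abs_le_of_sq_le_sq (by nlinarith [sq_nonneg (x.1 - p.1)]) hs)

lemma isCompact_sqDist_le (p : ℝ × ℝ) (R : ℝ) : IsCompact {y | sqDist p y ≤ R} := by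
  refine (isCompact_closedBall p (|R| + 1)).of_isClosed_subset
    (isClosed_le (contDiff_sqDist (n := 0) p).continuous continuous_const) fun y hy => ?_
  have hR : sqDist p y ≤ |R| := le_trans hy (le_abs_self R)
  exact dist_le_of_sqDist_le_sq (by positivity) (by nlinarith [abs_nonneg R])

lemma fderiv_sqDist_apply (p x e : ℝ × ℝ) :
    fderiv ℝ (sqDist p) x e = 2 * ((x.1 - p.1) * e.1 + (x.2 - p.2) * e.2) := by
  have h₁ : HasFDerivAt (fun y : ℝ × ℝ => y.1 - p.1) (ContinuousLinearMap.fst ℝ ℝ ℝ) x :=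
    hasFDerivAt_fst.sub_const _
  have h₂ : HasFDerivAt (fun y : ℝ × ℝ => y.2 - p.2) (ContinuousLinearMap.snd ℝ ℝ ℝ) x :=
    hasFDerivAt_snd.sub_const _
  have h : HasFDerivAt (sqDist p) _ x := (h₁.pow 2).add (h₂.pow 2)
  rw [h.fderiv]
  simp only [add_apply, smul_apply, ContinuousLinearMap.coe_fst', ContinuousLinearMap.coe_snd',
    smul_eq_mul, Nat.add_one_sub_one, pow_one, Nat.cast_ofNat, nsmul_eq_mul]
  ring

lemma lap_exp_neg_mul_sqDist (α : ℝ) (p x : ℝ × ℝ) :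
    lap (fun y => Real.exp (-α * sqDist p y)) x
      = (4 * α ^ 2 * sqDist p x - 4 * α) * Real.exp (-α * sqDist p x) := by
  have hρ (y : ℝ × ℝ) : DifferentiableAt ℝ (sqDist p) y :=
    (contDiff_sqDist (n := 1) p).differentiable one_ne_zero y
  have hexp (y e : ℝ × ℝ) : fderiv ℝ (fun y => Real.exp (-α * sqDist p y)) y e
      = Real.exp (-α * sqDist p y) * (-α * (2 * ((y.1 - p.1) * e.1 + (y.2 - p.2) * e.2))) := by
    rw [fderiv_exp ((hρ y).const_mul _), fderiv_const_mul (hρ y), ← fderiv_sqDist_apply]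
    rfl
  have hexp_diff : DifferentiableAt ℝ (fun y => Real.exp (-α * sqDist p y)) x :=
    ((hρ x).const_mul _).exp
  have hlin (e : ℝ × ℝ) : HasFDerivAt
      (fun y : ℝ × ℝ => -α * (2 * ((y.1 - p.1) * e.1 + (y.2 - p.2) * e.2)))
      (-α • (2 : ℝ) • (e.1 • ContinuousLinearMap.fst ℝ ℝ ℝ
        + e.2 • ContinuousLinearMap.snd ℝ ℝ ℝ)) x :=
    ((((hasFDerivAt_fst.sub_const _).mul_const _).add
      ((hasFDerivAt_snd.sub_const _).mul_const _)).const_mul _).const_mul _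
  have hexp₂ (e : ℝ × ℝ) :
      fderiv ℝ (fun y => fderiv ℝ (fun y => Real.exp (-α * sqDist p y)) y e) x e
        = (4 * α ^ 2 * ((x.1 - p.1) * e.1 + (x.2 - p.2) * e.2) ^ 2
          - 2 * α * (e.1 ^ 2 + e.2 ^ 2)) * Real.exp (-α * sqDist p x) := by
    simp only [hexp]
    rw [fderiv_fun_mul hexp_diff (hlin e).differentiableAt, (hlin e).fderiv]
    simp only [add_apply, smul_apply, smul_eq_mul, hexp, ContinuousLinearMap.coe_fst',
      ContinuousLinearMap.coe_snd']
    ring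
  rw [lap_eq, hexp₂, hexp₂, sqDist]
  ring

lemma exists_hopf_barrier (p : ℝ × ℝ) (R : ℝ) {C s : ℝ} (hC : 0 ≤ C) (hs : 0 < s) :
    ∃ w : ℝ × ℝ → ℝ, ContDiff ℝ 2 w ∧ (∀ y, w y ≤ 1) ∧ (∀ y, sqDist p y < R → 0 < w y) ∧
      (∀ y, sqDist p y = R → w y = 0) ∧ ∀ y, s < sqDist p y → C * w y < lap w y := by
  set α := 2 / s + C with hα_def
  have hα : 0 < α := by positivity
  refine ⟨fun y => Real.exp (-α * sqDist p y) - Real.exp (-α * R), ?_, fun y => ?_,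
    fun y hy => ?_, fun y hy => ?_, fun y hy => ?_⟩
  · have := contDiff_sqDist (n := 2) p
    fun_prop
  · have : Real.exp (-α * sqDist p y) ≤ 1 :=
      Real.exp_le_one_iff.2 (by nlinarith [sqDist_nonneg p y])
    linarith [Real.exp_pos (-α * R)]
  · exact sub_pos.2 (Real.exp_lt_exp.2 (by nlinarith))
  · simp only [hy, sub_self]
  · have hαs : 2 < α * sqDist p y := calc
      2 ≤ 2 + C * s := le_add_of_nonneg_right (by positivity)
      _ = α * s := by rw [hα_def]; field_simp
      _ < α * sqDist p y := by gcongr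
    have hαC : C ≤ α := le_add_of_nonneg_left (by positivity)
    have hcoeff : C < 4 * α ^ 2 * sqDist p y - 4 * α := by nlinarith
    rw [lap_sub_const, lap_exp_neg_mul_sqDist]
    calc C * (Real.exp (-α * sqDist p y) - Real.exp (-α * R))
        ≤ C * Real.exp (-α * sqDist p y) := by gcongr; linarith [Real.exp_pos (-α * R)]
      _ < _ := by gcongr

lemma exists_pos_forall_sqDist_le {P : ℝ × ℝ → Prop} (h : ∀ᶠ y in nhds p, P y) :
    ∃ s, 0 < s ∧ ∀ y, sqDist p y ≤ s → P y := by
  obtain ⟨r, hr, hball⟩ := Metric.nhds_basis_closedBall.eventually_iff.1 h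
  exact ⟨r ^ 2, by positivity, fun y hy => hball (dist_le_of_sqDist_le_sq hr.le hy)⟩

theorem pos_of_lap_le_mul (hf : ContDiff ℝ 2 f) (hc : Continuous c) (hf₀ : ∀ y, 0 ≤ f y)
    (hlap : ∀ y, lap f y ≤ c y * f y) (hp : 0 < f p) (x : ℝ × ℝ) : 0 < f x := by
  obtain ⟨m, hm, hmp⟩ := exists_between hp
  obtain ⟨s, hs, hfs⟩ := exists_pos_forall_sqDist_le
    (hf.continuous.continuousAt.eventually_const_le hmp)
  -- Compare `f` with a multiple of the Hopf barrier on the annulus `s < sqDist p < R`.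
  set R := sqDist p x + 1
  set K := {y | sqDist p y ≤ R}
  set U := {y | s < sqDist p y} ∩ {y | sqDist p y < R}
  have hρ := (contDiff_sqDist (n := 0) p).continuous
  have hK : IsCompact K := isCompact_sqDist_le p R
  have hU : IsOpen U := (isOpen_lt continuous_const hρ).inter (isOpen_lt hρ continuous_const)
  have hUK : U ⊆ K := fun y hy => le_of_lt (α := ℝ) hy.2
  obtain ⟨C, hC⟩ := hK.bddAbove_image hc.continuousOn
  obtain ⟨w, hw, hw_le_one, hw_pos, hw_bdry, hw_lap⟩ :=
    exists_hopf_barrier p R (le_max_right C 0) hs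
  have hbdry : ∀ y ∈ K \ U, 0 ≤ f y - m * w y := by
    intro y hy
    rcases le_or_gt (sqDist p y) s with hys | hys
    · nlinarith [hfs y hys, hw_le_one y]
    · have hyR : sqDist p y = R := le_antisymm hy.1 (not_lt.1 fun h => hy.2 ⟨hys, h⟩)
      simpa [hw_bdry y hyR] using hf₀ y
  have hintegral : ∀ y ∈ U, f y - m * w y < 0 → lap (fun z => f z - m * w z) y < 0 := by
    intro y hy hneg
    have hcC : c y ≤ max C 0 := le_max_of_le_left (hC (Set.mem_image_of_mem c (hUK hy)))
    rw [lap_sub_const_mul hf hw, sub_neg]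
    calc lap f y ≤ c y * f y := hlap y
      _ ≤ max C 0 * f y := by gcongr; exact hf₀ y
      _ ≤ max C 0 * (m * w y) := by gcongr; exact (sub_neg.1 hneg).le
      _ = m * (max C 0 * w y) := by ring
      _ < m * lap w y := by gcongr; exact hw_lap y hy.1
  have hx : sqDist p x < R := lt_add_one _
  have hcomp : 0 ≤ f x - m * w x :=
    nonneg_of_lap_neg_of_neg hK hU hUK (hf.sub (contDiff_const.mul hw)) hbdry hintegral hx.le
  have hmw : 0 < m * w x := mul_pos hm (hw_pos x hx)
  linarith

end StrongMaximumPrinciple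

/-! ### Periodic functions -/

section Periodic

variable {E E' E'' : Type*}

/-- The fundamental domain `[0,1]²` of the lattice `ℤ²`. -/
abbrev unitSquare : Set (ℝ × ℝ) := Set.Icc (0 : ℝ) 1 ×ˢ Set.Icc (0 : ℝ) 1

lemma fract_mem_unitSquare (x : ℝ × ℝ) : (Int.fract x.1, Int.fract x.2) ∈ unitSquare :=
  ⟨⟨Int.fract_nonneg _, (Int.fract_lt_one _).le⟩, ⟨Int.fract_nonneg _, (Int.fract_lt_one _).le⟩⟩

lemma isCompact_unitSquare : IsCompact unitSquare := isCompact_Icc.prod isCompact_Icc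

lemma unitSquare_subset_closure_interior : unitSquare ⊆ closure (interior unitSquare) := by
  rw [interior_prod_eq, interior_Icc, closure_prod_eq, closure_Ioo zero_ne_one]

lemma Periodic2.comp {f : ℝ × ℝ → E} (hf : Periodic2 f) (g : E → E') :
    Periodic2 fun x => g (f x) :=
  fun x => ⟨congrArg g (hf x).1, congrArg g (hf x).2⟩

lemma Periodic2.comp₂ {f : ℝ × ℝ → E} {f' : ℝ × ℝ → E'} (hf : Periodic2 f) (hf' : Periodic2 f')
    (g : E → E' → E'') : Periodic2 fun x => g (f x) (f' x) :=
  fun x => ⟨congrArg₂ g (hf x).1 (hf' x).1, congrArg₂ g (hf x).2 (hf' x).2⟩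

lemma periodic2_iff {f : ℝ × ℝ → E} :
    Periodic2 f ↔ Function.Periodic f (1, 0) ∧ Function.Periodic f (0, 1) := by
  simp [Periodic2, Function.Periodic, forall_and]

lemma periodic_fderiv_apply {V : Type*} [NormedAddCommGroup V] [NormedSpace ℝ V]
    [NormedAddCommGroup E] [NormedSpace ℝ E] {f : V → E} {a : V} (hf : Function.Periodic f a)
    (e : V) : Function.Periodic (fun x => fderiv ℝ f x e) a := fun x => by
  have hshift : (fun y => f (y + a)) = f := funext hf
  simp only [← fderiv_comp_add_right, hshift]

lemma Periodic2.fderiv_apply [NormedAddCommGroup E] [NormedSpace ℝ E] {f : ℝ × ℝ → E}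
    (hf : Periodic2 f) (e : ℝ × ℝ) : Periodic2 fun x => fderiv ℝ f x e := by
  rw [periodic2_iff] at hf ⊢
  exact ⟨periodic_fderiv_apply hf.1 e, periodic_fderiv_apply hf.2 e⟩

lemma Periodic2.apply_fract {f : ℝ × ℝ → E} (hf : Periodic2 f) (x : ℝ × ℝ) :
    f (Int.fract x.1, Int.fract x.2) = f x := by
  have h₁ : Function.Periodic (fun s => f (s, x.2)) 1 := fun s => (hf (s, x.2)).1
  have h₂ : Function.Periodic (fun t => f (Int.fract x.1, t)) 1 :=
    fun t => (hf (Int.fract x.1, t)).2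
  calc f (Int.fract x.1, Int.fract x.2) = f (Int.fract x.1, x.2) := by
        simpa using h₂.sub_int_mul_eq (x := x.2) ⌊x.2⌋
    _ = f x := by simpa using h₁.sub_int_mul_eq (x := x.1) ⌊x.1⌋

lemma Periodic2.exists_forall_le {φ : ℝ × ℝ → ℝ} (hφ : Periodic2 φ) (hcont : Continuous φ) :
    ∃ q, ∀ x, φ x ≤ φ q := by
  obtain ⟨q, -, hq⟩ :=
    isCompact_unitSquare.exists_isMaxOn ⟨_, fract_mem_unitSquare 0⟩ hcont.continuousOn
  exact ⟨q, fun x => hφ.apply_fract x ▸ hq (fract_mem_unitSquare x)⟩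

theorem Periodic2.forall_neg_or_exists_eq_const {φ c : ℝ × ℝ → ℝ} (hφp : Periodic2 φ)
    (hφ : ContDiff ℝ 2 φ) (hc : Continuous c) (hc₀ : ∀ x, 0 ≤ c x)
    (hlap : ∀ x, c x * φ x ≤ lap φ x) : (∀ x, φ x < 0) ∨ ∃ m, 0 ≤ m ∧ φ = fun _ => m := by
  obtain ⟨q, hq⟩ := hφp.exists_forall_le hφ.continuous
  rcases lt_or_ge (φ q) 0 with hneg | hm
  · exact Or.inl fun x => (hq x).trans_lt hneg
  refine Or.inr ⟨φ q, hm, funext fun p => by_contra fun hp => ?_⟩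
  have hpos : 0 < φ q - φ q := by
    refine pos_of_lap_le_mul (f := fun y => φ q - φ y) (p := p) (contDiff_const.sub hφ) hc
      (fun y => sub_nonneg.2 (hq y)) (fun y => ?_) (sub_pos.2 ((hq p).lt_of_ne hp)) q
    rw [lap_const_sub]
    nlinarith [hlap y, mul_nonneg (hc₀ y) hm]
  exact hpos.ne' (sub_self _)

lemma integrableOn_unitSquare {f : ℝ × ℝ → ℝ} (hf : Continuous f) :
    IntegrableOn f unitSquare :=
  hf.continuousOn.integrableOn_compact isCompact_unitSquare

lemma Periodic2.integral_divergence_eq_zero {f g : ℝ × ℝ → ℝ} (hfp : Periodic2 f)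
    (hgp : Periodic2 g) (hf : ContDiff ℝ 1 f) (hg : ContDiff ℝ 1 g) :
    ∫ x in unitSquare, (pd1 f x + pd2 g x) = 0 := by
  have hcont : Continuous fun x => pd1 f x + pd2 g x :=
    (contDiff_fderiv_apply_const hf (zero_add 1).le (1, 0)).continuous.add
      (contDiff_fderiv_apply_const hg (zero_add 1).le (0, 1)).continuous
  have hintegral := integrableOn_unitSquare hcont
  have hf₁ (y : ℝ) : f (1, y) = f (0, y) := by simpa using (hfp (0, y)).1
  have hg₁ (y : ℝ) : g (y, 1) = g (y, 0) := by simpa using (hgp (y, 0)).2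
  rw [unitSquare, Set.Icc_prod_Icc] at hintegral ⊢
  have hdiv := integral_divergence_prod_Icc_of_hasFDerivAt_of_le f g (fderiv ℝ f) (fderiv ℝ g)
    (0, 0) (1, 1) (by simp [Prod.le_def]) hf.continuous.continuousOn hg.continuous.continuousOn
    (fun x _ => (hf.differentiable one_ne_zero x).hasFDerivAt)
    (fun x _ => (hg.differentiable one_ne_zero x).hasFDerivAt) hintegral
  simpa [pd1, pd2, hf₁, hg₁] using hdiv

lemma Periodic2.eq_zero_of_integral_nonpos {f : ℝ × ℝ → ℝ} (hfp : Periodic2 f)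
    (hf : Continuous f) (hf₀ : ∀ x, 0 ≤ f x) (hintegral : ∫ x in unitSquare, f x ≤ 0) (x : ℝ × ℝ) :
    f x = 0 := by
  have hzero : ∫ x in unitSquare, f x = 0 := le_antisymm hintegral (integral_nonneg hf₀)
  rw [integral_eq_zero_iff_of_nonneg hf₀ (integrableOn_unitSquare hf)] at hzero
  have heqOn := Measure.eqOn_of_ae_eq hzero hf.continuousOn continuousOn_const
    unitSquare_subset_closure_interior
  exact hfp.apply_fract x ▸ heqOn (fract_mem_unitSquare x)

end Periodic

/-! ### Covariant derivatives -/

section CovariantDerivative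

variable {V E F : Type*} [NormedAddCommGroup V] [NormedSpace ℝ V]
  [NormedAddCommGroup E] [NormedSpace ℝ E] [NormedAddCommGroup F] [NormedSpace ℝ F]

/-- The covariant derivative `D_e f = ∂_e f - iAf` in the direction `e`, where `A` is the component
of the connection in that direction. On the plane, `D1` and `D2` are the cases `e = (1, 0)` and
`e = (0, 1)`. -/
def covDeriv (e : V) (A : V → ℝ) (f : V → ℂ) (x : V) : ℂ := fderiv ℝ f x e - I * A x * f x

/-- The supercurrent `Im (ū D_e u)` in the direction `e`. -/
def current (e : V) (A : V → ℝ) (u : V → ℂ) (x : V) : ℝ := (conj (u x) * covDeriv e A u x).im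

variable {A : V → ℝ} {f g u v : V → ℂ} {x : V}

lemma fderiv_clm_comp_apply (L : E →L[ℝ] F) {w : V → E} (hw : DifferentiableAt ℝ w x) (e : V) :
    fderiv ℝ (fun y => L (w y)) x e = L (fderiv ℝ w x e) := by
  rw [show fderiv ℝ (fun y => L (w y)) x = _ from (L.hasFDerivAt.comp x hw.hasFDerivAt).fderiv]
  rfl

lemma contDiff_covDeriv {m n : ℕ∞ω} (hA : ContDiff ℝ m A) (hf : ContDiff ℝ n f)
    (hmn : m + 1 ≤ n) (e : V) : ContDiff ℝ m (covDeriv e A f) :=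
  (contDiff_fderiv_apply_const hf hmn e).sub
    ((contDiff_const.mul (ofRealCLM.contDiff.comp hA)).mul (hf.of_le (le_self_add.trans hmn)))

lemma covDeriv_add (hf : DifferentiableAt ℝ f x) (hg : DifferentiableAt ℝ g x) (e : V)
    (A : V → ℝ) : covDeriv e A (fun y => f y + g y) x = covDeriv e A f x + covDeriv e A g x := by
  simp only [covDeriv, fderiv_fun_add hf hg, add_apply]
  ring

lemma covDeriv_const_mul (hf : DifferentiableAt ℝ f x) (e : V) (A : V → ℝ) (c : ℂ) :
    covDeriv e A (fun y => c * f y) x = c * covDeriv e A f x := by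
  simp only [covDeriv, fderiv_const_mul hf, smul_apply, smul_eq_mul]
  ring

lemma covDeriv_add_smul (hu : DifferentiableAt ℝ u x) (hv : DifferentiableAt ℝ v x) (e : V)
    (A a : V → ℝ) (t : ℝ) :
    covDeriv e (fun y => A y + t * a y) (fun y => u y + t • v y) x
      = covDeriv e A u x + t * (covDeriv e A v x - I * a x * u x) + t ^ 2 * (-I * a x * v x) := by
  rw [covDeriv, fderiv_fun_add hu (hv.fun_const_smul t), fderiv_fun_const_smul hv]
  simp only [covDeriv, add_apply, smul_apply, real_smul, ofReal_add, ofReal_mul]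
  ring

lemma differentiableAt_conj_mul (hf : DifferentiableAt ℝ f x) (hg : DifferentiableAt ℝ g x) :
    DifferentiableAt ℝ (fun y => conj (f y) * g y) x :=
  DifferentiableAt.fun_mul (conjCLE.differentiableAt.comp x hf) hg

lemma fderiv_conj_mul (hf : DifferentiableAt ℝ f x) (hg : DifferentiableAt ℝ g x) (e : V)
    (A : V → ℝ) : fderiv ℝ (fun y => conj (f y) * g y) x e
      = conj (covDeriv e A f x) * g x + conj (f x) * covDeriv e A g x := by
  have hconj : DifferentiableAt ℝ (fun y => conj (f y)) x := conjCLE.differentiableAt.comp x hf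
  have hfderiv : fderiv ℝ (fun y => conj (f y)) x e = conj (fderiv ℝ f x e) :=
    fderiv_clm_comp_apply conjCLE.toContinuousLinearMap hf e
  simp only [fderiv_fun_mul hconj hg, covDeriv, add_apply, smul_apply, smul_eq_mul, hfderiv,
    map_sub, map_mul, conj_I, conj_ofReal]
  ring

lemma fderiv_norm_sq_eq_re_conj_mul_covDeriv (hu : DifferentiableAt ℝ u x) (e : V) (A : V → ℝ) :
    fderiv ℝ (fun y => ‖u y‖ ^ 2) x e = 2 * (conj (u x) * covDeriv e A u x).re := by
  have hnorm : (fun y => ‖u y‖ ^ 2) = fun y => reCLM (conj (u y) * u y) := by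
    funext y
    rw [conj_mul', reCLM_apply, ← ofReal_pow, ofReal_re]
  rw [hnorm, fderiv_clm_comp_apply reCLM (differentiableAt_conj_mul hu hu),
    fderiv_conj_mul hu hu e A]
  simp only [reCLM_apply, add_re, mul_re, conj_re, conj_im]
  ring

lemma covDeriv_covDeriv (hA : DifferentiableAt ℝ A x) (hu : ContDiff ℝ 2 u) (d e : V)
    (B : V → ℝ) : covDeriv d B (covDeriv e A u) x = fderiv ℝ (fun y => fderiv ℝ u y e) x d
      - I * (fderiv ℝ A x d * u x + A x * fderiv ℝ u x d)
      - I * B x * (fderiv ℝ u x e - I * A x * u x) := by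
  have hu₁ : DifferentiableAt ℝ u x := hu.differentiable two_ne_zero x
  have hu₂ : DifferentiableAt ℝ (fun y => fderiv ℝ u y e) x :=
    (contDiff_fderiv_apply_const hu one_add_one_eq_two.le e).differentiable one_ne_zero x
  have hAc : DifferentiableAt ℝ (fun y => (A y : ℂ)) x := ofRealCLM.differentiableAt.comp x hA
  have hAfderiv : fderiv ℝ (fun y => (A y : ℂ)) x d = fderiv ℝ A x d :=
    fderiv_clm_comp_apply ofRealCLM hA d
  rw [covDeriv, show covDeriv e A u = fun y => fderiv ℝ u y e - I * A y * u y from rfl,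
    fderiv_fun_sub hu₂ ((hAc.const_mul I).fun_mul hu₁),
    fderiv_fun_mul (hAc.const_mul I) hu₁, fderiv_const_mul hAc]
  simp only [sub_apply, add_apply, smul_apply, smul_eq_mul, hAfderiv]
  ring

lemma covDeriv_covDeriv_sub_comm {d e : V} {A B : V → ℝ} (hA : DifferentiableAt ℝ A x)
    (hB : DifferentiableAt ℝ B x) (hu : ContDiff ℝ 2 u) :
    covDeriv d A (covDeriv e B u) x - covDeriv e B (covDeriv d A u) x
      = -I * (fderiv ℝ B x d - fderiv ℝ A x e : ℝ) * u x := by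
  rw [covDeriv_covDeriv hA hu, covDeriv_covDeriv hB hu, fderiv_fderiv_apply_comm hu.contDiffAt d e]
  push_cast
  ring

lemma contDiff_current {m n : ℕ∞ω} (hA : ContDiff ℝ m A) (hu : ContDiff ℝ n u)
    (hmn : m + 1 ≤ n) (e : V) : ContDiff ℝ m (current e A u) :=
  imCLM.contDiff.comp <|
    (conjCLE.contDiff.comp (hu.of_le (le_self_add.trans hmn))).mul (contDiff_covDeriv hA hu hmn e)

lemma fderiv_current_apply {d e : V} (hA : ContDiff ℝ 1 A) (hu : ContDiff ℝ 2 u) (B : V → ℝ) :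
    fderiv ℝ (current e A u) x d
      = (conj (covDeriv d B u x) * covDeriv e A u x
          + conj (u x) * covDeriv d B (covDeriv e A u) x).im := by
  have hu₁ : DifferentiableAt ℝ u x := hu.differentiable two_ne_zero x
  have hDu : DifferentiableAt ℝ (covDeriv e A u) x :=
    (contDiff_covDeriv hA hu one_add_one_eq_two.le e).differentiable one_ne_zero x
  rw [← fderiv_conj_mul hu₁ hDu]
  exact fderiv_clm_comp_apply imCLM (differentiableAt_conj_mul hu₁ hDu) d

lemma fderiv_current_sub_comm {d e : V} {A B : V → ℝ} (hA : ContDiff ℝ 1 A)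
    (hB : ContDiff ℝ 1 B) (hu : ContDiff ℝ 2 u) :
    fderiv ℝ (current e B u) x d - fderiv ℝ (current d A u) x e
      = 2 * (conj (covDeriv d A u x) * covDeriv e B u x).im
        - (fderiv ℝ B x d - fderiv ℝ A x e) * ‖u x‖ ^ 2 := by
  have hcomm := covDeriv_covDeriv_sub_comm (hA.differentiable one_ne_zero x)
    (hB.differentiable one_ne_zero x) hu (d := d) (e := e)
  have hcurv : (conj (u x) * (covDeriv d A (covDeriv e B u) x
      - covDeriv e B (covDeriv d A u) x)).im
        = -((fderiv ℝ B x d - fderiv ℝ A x e) * ‖u x‖ ^ 2) := by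
    rw [hcomm, ← normSq_eq_norm_sq, normSq_apply]
    simp only [mul_im, mul_re, neg_im, neg_re, I_re, I_im, ofReal_re, ofReal_im, conj_re, conj_im]
    ring
  rw [fderiv_current_apply hB hu A, fderiv_current_apply hA hu B]
  simp only [mul_im, conj_re, conj_im, sub_re, sub_im, add_im] at hcurv ⊢
  linarith

lemma Periodic2.covDeriv {A : ℝ × ℝ → ℝ} {f : ℝ × ℝ → ℂ} (hA : Periodic2 A) (hf : Periodic2 f)
    (e : ℝ × ℝ) : Periodic2 (covDeriv e A f) :=
  (hf.fderiv_apply e).comp₂ (hA.comp₂ hf fun a z => I * a * z) fun z w => z - w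

lemma Periodic2.current {A : ℝ × ℝ → ℝ} {u : ℝ × ℝ → ℂ} (hA : Periodic2 A) (hu : Periodic2 u)
    (e : ℝ × ℝ) : Periodic2 (current e A u) :=
  hu.comp₂ (hA.covDeriv hu e) fun z w => (conj z * w).im

end CovariantDerivative

/-! ### The vortex operators of both orientations -/

section Vortex

/-- The operator `D₁ + s i D₂` for an orientation `s = ±1`; it takes `u` to `σ₊` and `σ₋`. -/
def dbar (s : ℝ) (A1 A2 : ℝ × ℝ → ℝ) (f : ℝ × ℝ → ℂ) (x : ℝ × ℝ) : ℂ :=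
  covDeriv (1, 0) A1 f x + s * I * covDeriv (0, 1) A2 f x

/-- The failure `sF - h` of the second vortex equation for an orientation `s = ±1`. -/
def defect (s ε : ℝ) (u : ℝ × ℝ → ℂ) (A1 A2 : ℝ × ℝ → ℝ) (x : ℝ × ℝ) : ℝ :=
  s * curv A1 A2 x - hfun ε u x

variable {s ε : ℝ} {u : ℝ × ℝ → ℂ} {A1 A2 : ℝ × ℝ → ℝ}

lemma sigP_eq_dbar_one (u : ℝ × ℝ → ℂ) (A1 A2 : ℝ × ℝ → ℝ) :
    sigP u A1 A2 = dbar 1 A1 A2 u := by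
  funext x
  simp only [dbar, ofReal_one, one_mul]
  rfl

lemma sigM_eq_dbar_neg_one (u : ℝ × ℝ → ℂ) (A1 A2 : ℝ × ℝ → ℝ) :
    sigM u A1 A2 = dbar (-1) A1 A2 u := by
  funext x
  simp only [dbar, ofReal_neg, ofReal_one, neg_mul, one_mul, ← sub_eq_add_neg]
  rfl

lemma curv_eq_of_defect_eq_zero {x : ℝ × ℝ} (hs : s ^ 2 = 1) (h : defect s ε u A1 A2 x = 0) :
    curv A1 A2 x = s * hfun ε u x := by
  rw [defect] at h
  linear_combination s * h - curv A1 A2 x * hs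

lemma re_mul_dbar_neg (s : ℝ) (A1 A2 : ℝ × ℝ → ℝ) (f : ℝ × ℝ → ℂ) (x : ℝ × ℝ) (z : ℂ) :
    (z * dbar (-s) A1 A2 f x).re
      = (z * covDeriv (1, 0) A1 f x).re + s * (z * covDeriv (0, 1) A2 f x).im := by
  simp only [dbar, mul_re, mul_im, add_re, add_im, ofReal_re, ofReal_im, I_re, I_im]
  ring

lemma re_conj_dbar_mul (s : ℝ) (A1 A2 : ℝ × ℝ → ℝ) (f : ℝ × ℝ → ℂ) (x : ℝ × ℝ) (z : ℂ) :
    (conj (dbar s A1 A2 f x) * z).re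
      = (conj (covDeriv (1, 0) A1 f x) * z).re + s * (conj (covDeriv (0, 1) A2 f x) * z).im := by
  simp only [dbar, mul_re, mul_im, add_re, add_im, conj_re, conj_im, ofReal_re, ofReal_im, I_re,
    I_im]
  ring

lemma contDiff_dbar {m n : ℕ∞ω} {f : ℝ × ℝ → ℂ} (hA1 : ContDiff ℝ m A1) (hA2 : ContDiff ℝ m A2)
    (hf : ContDiff ℝ n f) (hmn : m + 1 ≤ n) (s : ℝ) : ContDiff ℝ m (dbar s A1 A2 f) :=
  (contDiff_covDeriv hA1 hf hmn _).add (contDiff_const.mul (contDiff_covDeriv hA2 hf hmn _))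

lemma Periodic2.dbar {f : ℝ × ℝ → ℂ} (hA1 : Periodic2 A1) (hA2 : Periodic2 A2)
    (hf : Periodic2 f) (s : ℝ) : Periodic2 (dbar s A1 A2 f) :=
  (hA1.covDeriv hf _).comp₂ (hA2.covDeriv hf _) fun z w => z + s * I * w

lemma contDiff_curv {m n : ℕ∞ω} (hA1 : ContDiff ℝ n A1) (hA2 : ContDiff ℝ n A2)
    (hmn : m + 1 ≤ n) : ContDiff ℝ m (curv A1 A2) :=
  (contDiff_fderiv_apply_const hA2 hmn _).sub (contDiff_fderiv_apply_const hA1 hmn _)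

lemma contDiff_hfun {n : ℕ∞ω} (ε : ℝ) (hu : ContDiff ℝ n u) : ContDiff ℝ n (hfun ε u) :=
  (contDiff_const.sub (hu.norm_sq ℝ)).div_const _

lemma contDiff_defect {m n : ℕ∞ω} (hu : ContDiff ℝ m u) (hA1 : ContDiff ℝ n A1)
    (hA2 : ContDiff ℝ n A2) (hmn : m + 1 ≤ n) (s ε : ℝ) :
    ContDiff ℝ m (defect s ε u A1 A2) :=
  (contDiff_const.mul (contDiff_curv hA1 hA2 hmn)).sub (contDiff_hfun ε hu)

lemma Periodic2.defect (hu : Periodic2 u) (hA1 : Periodic2 A1) (hA2 : Periodic2 A2) (s ε : ℝ) :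
    Periodic2 (defect s ε u A1 A2) :=
  ((hA2.fderiv_apply (1, 0)).comp₂ (hA1.fderiv_apply (0, 1)) fun p q => s * (p - q)).comp₂
    (hu.comp fun z => (1 - ‖z‖ ^ 2) / (2 * ε ^ 2)) fun p q => p - q

lemma fderiv_hfun_apply {x : ℝ × ℝ} (hu : DifferentiableAt ℝ u x) (ε : ℝ) (e : ℝ × ℝ)
    (A : ℝ × ℝ → ℝ) :
    fderiv ℝ (hfun ε u) x e = -(conj (u x) * covDeriv e A u x).re / ε ^ 2 := by
  have hlin : hfun ε u = fun y => (2 * ε ^ 2)⁻¹ * (1 - ‖u y‖ ^ 2) := by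
    funext y
    rw [hfun, div_eq_inv_mul]
  rw [hlin, fderiv_const_mul ((hu.norm_sq ℝ).const_sub 1), fderiv_const_sub, smul_apply, neg_apply,
    fderiv_norm_sq_eq_re_conj_mul_covDeriv hu e A, smul_eq_mul]
  ring

lemma dbar_neg_dbar_of_isYMH (hs : s ^ 2 = 1) (hu : ContDiff ℝ 2 u) (hYMH : IsYMH ε u A1 A2)
    (hA1 : ContDiff ℝ 1 A1) (hA2 : ContDiff ℝ 1 A2) (x : ℝ × ℝ) :
    dbar (-s) A1 A2 (dbar s A1 A2 u) x = defect s ε u A1 A2 x * u x := by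
  have hD1 : DifferentiableAt ℝ (covDeriv (1, 0) A1 u) x :=
    (contDiff_covDeriv hA1 hu one_add_one_eq_two.le _).differentiable one_ne_zero x
  have hD2 : DifferentiableAt ℝ (covDeriv (0, 1) A2 u) x :=
    (contDiff_covDeriv hA2 hu one_add_one_eq_two.le _).differentiable one_ne_zero x
  have hDdbar (e : ℝ × ℝ) (A : ℝ × ℝ → ℝ) : covDeriv e A (dbar s A1 A2 u) x
      = covDeriv e A (covDeriv (1, 0) A1 u) x + s * I * covDeriv e A (covDeriv (0, 1) A2 u) x := by
    rw [← covDeriv_const_mul hD2, ← covDeriv_add hD1 (hD2.const_mul _)]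
    rfl
  have hcomm : covDeriv (1, 0) A1 (covDeriv (0, 1) A2 u) x
      - covDeriv (0, 1) A2 (covDeriv (1, 0) A1 u) x = -I * curv A1 A2 x * u x :=
    covDeriv_covDeriv_sub_comm (hA1.differentiable one_ne_zero x)
      (hA2.differentiable one_ne_zero x) hu
  have hHiggs : -(covDeriv (1, 0) A1 (covDeriv (1, 0) A1 u) x
      + covDeriv (0, 1) A2 (covDeriv (0, 1) A2 u) x) = hfun ε u x * u x := hYMH.1 x
  have hs' : (s : ℂ) ^ 2 = 1 := mod_cast hs
  rw [dbar, hDdbar, hDdbar, defect]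
  push_cast
  linear_combination s * I * hcomm - hHiggs - s * curv A1 A2 x * u x * I_sq
    - s ^ 2 * covDeriv (0, 1) A2 (covDeriv (0, 1) A2 u) x * I_sq
    + covDeriv (0, 1) A2 (covDeriv (0, 1) A2 u) x * hs'

lemma fderiv_defect_of_isYMH (hs : s ^ 2 = 1) (hu : ContDiff ℝ 2 u) (hYMH : IsYMH ε u A1 A2)
    (hε : ε ≠ 0) (hA1 : ContDiff ℝ 2 A1) (hA2 : ContDiff ℝ 2 A2) (x : ℝ × ℝ) :
    fderiv ℝ (defect s ε u A1 A2) x (1, 0) = (conj (u x) * dbar s A1 A2 u x).re / ε ^ 2 ∧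
    fderiv ℝ (defect s ε u A1 A2) x (0, 1) = s * (conj (u x) * dbar s A1 A2 u x).im / ε ^ 2 := by
  have hu₁ := hu.differentiable two_ne_zero x
  have hcurv : DifferentiableAt ℝ (curv A1 A2) x :=
    (contDiff_curv hA1 hA2 one_add_one_eq_two.le).differentiable one_ne_zero x
  have hh : DifferentiableAt ℝ (hfun ε u) x :=
    (contDiff_hfun ε hu).differentiable two_ne_zero x
  have hdefect (e : ℝ × ℝ) (A : ℝ × ℝ → ℝ) : fderiv ℝ (defect s ε u A1 A2) x e
      = s * fderiv ℝ (curv A1 A2) x e + (conj (u x) * covDeriv e A u x).re / ε ^ 2 := by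
    rw [show defect s ε u A1 A2 = fun y => s * curv A1 A2 y - hfun ε u y from rfl,
      fderiv_fun_sub (hcurv.const_mul s) hh, fderiv_const_mul hcurv, sub_apply, smul_apply,
      fderiv_hfun_apply hu₁ ε e A, smul_eq_mul]
    ring
  have hF₂ : ε ^ 2 * fderiv ℝ (curv A1 A2) x (0, 1)
      = (conj (u x) * covDeriv (1, 0) A1 u x).im := hYMH.2.1 x
  have hF₁ : ε ^ 2 * fderiv ℝ (curv A1 A2) x (1, 0)
      = -(conj (u x) * covDeriv (0, 1) A2 u x).im := hYMH.2.2 x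
  constructor
  · rw [hdefect (1, 0) A1, dbar]
    simp only [mul_re, mul_im, add_re, add_im, conj_re, conj_im, ofReal_re, ofReal_im, I_re, I_im]
      at hF₁ ⊢
    field_simp
    linear_combination s * hF₁
  · rw [hdefect (0, 1) A2, dbar]
    simp only [mul_re, mul_im, add_re, add_im, conj_re, conj_im, ofReal_re, ofReal_im, I_re, I_im]
      at hF₂ ⊢
    field_simp
    linear_combination s * hF₂ - ((u x).re * (covDeriv (0, 1) A2 u x).re
      + (u x).im * (covDeriv (0, 1) A2 u x).im) * hs

lemma lap_defect_of_isYMH (hs : s ^ 2 = 1) (hu : ContDiff ℝ 2 u) (hYMH : IsYMH ε u A1 A2)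
    (hε : ε ≠ 0) (hA1 : ContDiff ℝ 2 A1) (hA2 : ContDiff ℝ 2 A2) (x : ℝ × ℝ) :
    lap (defect s ε u A1 A2) x
      = (‖dbar s A1 A2 u x‖ ^ 2 + ‖u x‖ ^ 2 * defect s ε u A1 A2 x) / ε ^ 2 := by
  have hu₁ := hu.differentiable two_ne_zero x
  have hA1' : ContDiff ℝ 1 A1 := hA1.of_le one_le_two
  have hA2' : ContDiff ℝ 1 A2 := hA2.of_le one_le_two
  have hσ : DifferentiableAt ℝ (dbar s A1 A2 u) x :=
    (contDiff_dbar hA1' hA2' hu one_add_one_eq_two.le s).differentiable one_ne_zero x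
  have hσu := differentiableAt_conj_mul hu₁ hσ
  have h₁ : (fun y => fderiv ℝ (defect s ε u A1 A2) y (1, 0))
      = fun y => ((ε ^ 2)⁻¹ • reCLM) (conj (u y) * dbar s A1 A2 u y) := by
    funext y
    rw [(fderiv_defect_of_isYMH hs hu hYMH hε hA1 hA2 y).1, div_eq_inv_mul]
    rfl
  have h₂ : (fun y => fderiv ℝ (defect s ε u A1 A2) y (0, 1))
      = fun y => ((ε ^ 2)⁻¹ • s • imCLM) (conj (u y) * dbar s A1 A2 u y) := by
    funext y
    rw [(fderiv_defect_of_isYMH hs hu hYMH hε hA1 hA2 y).2, div_eq_inv_mul]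
    rfl
  have hsecond : (conj (u x) * dbar (-s) A1 A2 (dbar s A1 A2 u) x).re
      = ‖u x‖ ^ 2 * defect s ε u A1 A2 x := by
    rw [dbar_neg_dbar_of_isYMH hs hu hYMH hA1' hA2' x, mul_left_comm, conj_mul', re_ofReal_mul,
      ← ofReal_pow, ofReal_re, mul_comm]
  have hfirst : (conj (dbar s A1 A2 u x) * dbar s A1 A2 u x).re = ‖dbar s A1 A2 u x‖ ^ 2 := by
    rw [conj_mul', ← ofReal_pow, ofReal_re]
  rw [re_mul_dbar_neg] at hsecond
  rw [re_conj_dbar_mul] at hfirst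
  rw [lap_eq, h₁, h₂, fderiv_clm_comp_apply _ hσu, fderiv_clm_comp_apply _ hσu,
    fderiv_conj_mul hu₁ hσ _ A1, fderiv_conj_mul hu₁ hσ _ A2, ← hfirst, ← hsecond]
  simp only [smul_apply, reCLM_apply, imCLM_apply, smul_eq_mul, add_re, add_im]
  ring

end Vortex

/-! ### Stability and the Bogomolny form of the energy -/

section Stability

variable {r s ε : ℝ} {u v : ℝ × ℝ → ℂ} {A1 A2 a1 a2 : ℝ × ℝ → ℝ}

lemma energy_density_eq_add_divergence (hr : r ^ 2 = 1) (hε : ε ≠ 0) (hu : ContDiff ℝ 2 u)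
    (hA1 : ContDiff ℝ 1 A1) (hA2 : ContDiff ℝ 1 A2) (x : ℝ × ℝ) :
    ε ^ 2 * curv A1 A2 x ^ 2 + ‖D1 A1 u x‖ ^ 2 + ‖D2 A2 u x‖ ^ 2
        + (1 - ‖u x‖ ^ 2) ^ 2 / (4 * ε ^ 2)
      = ‖dbar r A1 A2 u x‖ ^ 2 + ε ^ 2 * defect r ε u A1 A2 x ^ 2
        + r * (pd1 (fun y => current (0, 1) A2 u y + A2 y) x
          + pd2 (fun y => -(current (1, 0) A1 u y + A1 y)) x) := by
  have hj (e : ℝ × ℝ) {A : ℝ × ℝ → ℝ} (hA : ContDiff ℝ 1 A) (d : ℝ × ℝ) :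
      fderiv ℝ (fun y => current e A u y + A y) x d
        = fderiv ℝ (current e A u) x d + fderiv ℝ A x d := by
    rw [fderiv_fun_add ((contDiff_current hA hu one_add_one_eq_two.le e).differentiable
      one_ne_zero x) (hA.differentiable one_ne_zero x), add_apply]
  have hcurl := fderiv_current_sub_comm hA1 hA2 hu (x := x) (d := (1, 0)) (e := (0, 1))
  have hdiv : pd1 (fun y => current (0, 1) A2 u y + A2 y) x
      + pd2 (fun y => -(current (1, 0) A1 u y + A1 y)) x
        = 2 * (conj (D1 A1 u x) * D2 A2 u x).im + curv A1 A2 x * (1 - ‖u x‖ ^ 2) := by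
    rw [pd1, pd2, fderiv_fun_neg, neg_apply, hj _ hA1, hj _ hA2]
    change _ = 2 * (conj (covDeriv (1, 0) A1 u x) * covDeriv (0, 1) A2 u x).im
      + (fderiv ℝ A2 x (1, 0) - fderiv ℝ A1 x (0, 1)) * (1 - ‖u x‖ ^ 2)
    linear_combination hcurl
  have hnorm : ‖dbar r A1 A2 u x‖ ^ 2 = ‖D1 A1 u x‖ ^ 2 + ‖D2 A2 u x‖ ^ 2
      - 2 * r * (conj (D1 A1 u x) * D2 A2 u x).im := by
    rw [show dbar r A1 A2 u x = D1 A1 u x + r * I * D2 A2 u x from rfl]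
    simp only [← normSq_eq_norm_sq, normSq_apply, mul_re, mul_im, add_re, add_im, conj_re, conj_im,
      ofReal_re, ofReal_im, I_re, I_im]
    linear_combination ((D2 A2 u x).re ^ 2 + (D2 A2 u x).im ^ 2) * hr
  rw [hdiv, hnorm, defect, hfun]
  field_simp
  linear_combination -(16 * ε ^ 4 * curv A1 A2 x ^ 2) * hr

theorem energy_eq_integral_dbar_defect (hr : r ^ 2 = 1) (hε : ε ≠ 0) (hu : ContDiff ℝ 2 u)
    (hup : Periodic2 u) (hA1 : ContDiff ℝ 1 A1) (hA1p : Periodic2 A1) (hA2 : ContDiff ℝ 1 A2)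
    (hA2p : Periodic2 A2) : energy ε u A1 A2
      = ∫ x in unitSquare, (‖dbar r A1 A2 u x‖ ^ 2 + ε ^ 2 * defect r ε u A1 A2 x ^ 2) := by
  have hj₁ : ContDiff ℝ 1 fun y => -(current (1, 0) A1 u y + A1 y) :=
    ((contDiff_current hA1 hu one_add_one_eq_two.le _).add hA1).neg
  have hj₂ : ContDiff ℝ 1 fun y => current (0, 1) A2 u y + A2 y :=
    (contDiff_current hA2 hu one_add_one_eq_two.le _).add hA2
  have hdiv := Periodic2.integral_divergence_eq_zero
    ((hA2p.current hup (0, 1)).comp₂ hA2p fun p q => p + q)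
    ((hA1p.current hup (1, 0)).comp₂ hA1p fun p q => -(p + q)) hj₂ hj₁
  have hdiv_cont : Continuous fun x => pd1 (fun y => current (0, 1) A2 u y + A2 y) x
      + pd2 (fun y => -(current (1, 0) A1 u y + A1 y)) x :=
    (contDiff_fderiv_apply_const hj₂ (zero_add 1).le _).continuous.add
      (contDiff_fderiv_apply_const hj₁ (zero_add 1).le _).continuous
  have hσ := (contDiff_dbar hA1 hA2 hu one_add_one_eq_two.le r).continuous
  have hφ := (contDiff_defect (hu.of_le zero_le_two) hA1 hA2 (zero_add 1).le r ε).continuous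
  simp only [energy, energy_density_eq_add_divergence hr hε hu hA1 hA2]
  rw [integral_add, integral_const_mul, hdiv, mul_zero, add_zero]
  · exact integrableOn_unitSquare (by fun_prop)
  · exact integrableOn_unitSquare (hdiv_cont.const_mul r)

/-- The variation `(v, a)` solves the linearization at `(u, A)` of the vortex equations of
orientation `r`. -/
structure IsLinearizedVortex (r ε : ℝ) (u : ℝ × ℝ → ℂ) (A1 A2 : ℝ × ℝ → ℝ) (v : ℝ × ℝ → ℂ)
    (a1 a2 : ℝ × ℝ → ℝ) : Prop where
  dbar_eq (x : ℝ × ℝ) : dbar r A1 A2 v x = I * (a1 x + r * I * a2 x) * u x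
  curv_eq (x : ℝ × ℝ) : r * curv a1 a2 x = -(conj (u x) * v x).re / ε ^ 2

lemma norm_add_ofReal_mul_sq (z w : ℂ) (t : ℝ) :
    ‖z + t * w‖ ^ 2 = ‖z‖ ^ 2 + 2 * t * (conj z * w).re + t ^ 2 * ‖w‖ ^ 2 := by
  simp only [← normSq_eq_norm_sq, normSq_apply, mul_re, mul_im, add_re, add_im, conj_re, conj_im,
    ofReal_re, ofReal_im]
  ring

lemma IsLinearizedVortex.dbar_add_smul (h : IsLinearizedVortex r ε u A1 A2 v a1 a2)
    (hu : Differentiable ℝ u) (hv : Differentiable ℝ v) (t : ℝ) (x : ℝ × ℝ) :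
    dbar r (fun y => A1 y + t * a1 y) (fun y => A2 y + t * a2 y) (fun y => u y + t • v y) x
      = dbar r A1 A2 u x + t ^ 2 * (-I * (a1 x + r * I * a2 x) * v x) := by
  have hdbar := h.dbar_eq x
  simp only [dbar, covDeriv_add_smul (hu x) (hv x)] at hdbar ⊢
  linear_combination t * hdbar

lemma IsLinearizedVortex.defect_add_smul (h : IsLinearizedVortex r ε u A1 A2 v a1 a2)
    (hA1 : Differentiable ℝ A1) (hA2 : Differentiable ℝ A2) (ha1 : Differentiable ℝ a1)
    (ha2 : Differentiable ℝ a2) (t : ℝ) (x : ℝ × ℝ) :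
    defect r ε (fun y => u y + t • v y) (fun y => A1 y + t * a1 y) (fun y => A2 y + t * a2 y) x
      = defect r ε u A1 A2 x + t ^ 2 * (‖v x‖ ^ 2 / (2 * ε ^ 2)) := by
  have hcurv : curv (fun y => A1 y + t * a1 y) (fun y => A2 y + t * a2 y) x
      = curv A1 A2 x + t * curv a1 a2 x := by
    simp only [curv, pd1, pd2, fderiv_fun_add (hA1 x) ((ha1 x).const_mul t),
      fderiv_fun_add (hA2 x) ((ha2 x).const_mul t), fderiv_const_mul (ha1 x),
      fderiv_const_mul (ha2 x), add_apply, smul_apply, smul_eq_mul]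
    ring
  rw [defect, defect, hfun, hfun, hcurv, real_smul, norm_add_ofReal_mul_sq]
  linear_combination t * h.curv_eq x

lemma iteratedDeriv_two_even_quartic (a b c : ℝ) :
    iteratedDeriv 2 (fun t : ℝ => a + t ^ 2 * b + t ^ 4 * c) 0 = 2 * b := by
  have hderiv : deriv (fun t : ℝ => a + t ^ 2 * b + t ^ 4 * c)
      = fun t => 2 * t * b + 4 * t ^ 3 * c := by
    funext t
    have h := (((hasDerivAt_pow 2 t).mul_const b).const_add a).add
      ((hasDerivAt_pow 4 t).mul_const c)
    exact (h.congr_deriv (by norm_num)).deriv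
  have h := (((hasDerivAt_id (0 : ℝ)).const_mul 2).mul_const b).add
    (((hasDerivAt_pow 3 (0 : ℝ)).const_mul 4).mul_const c)
  rw [iteratedDeriv_succ, iteratedDeriv_one, hderiv]
  exact (h.congr_deriv (by norm_num)).deriv

theorem IsLinearizedVortex.exists_energy_add_smul_eq (h : IsLinearizedVortex r ε u A1 A2 v a1 a2)
    (hr : r ^ 2 = 1) (hε : ε ≠ 0) (hu : ContDiff ℝ 2 u) (hup : Periodic2 u)
    (hA1 : ContDiff ℝ 1 A1) (hA1p : Periodic2 A1) (hA2 : ContDiff ℝ 1 A2) (hA2p : Periodic2 A2)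
    (hv : ContDiff ℝ 2 v) (hvp : Periodic2 v) (ha1 : ContDiff ℝ 1 a1) (ha1p : Periodic2 a1)
    (ha2 : ContDiff ℝ 1 a2) (ha2p : Periodic2 a2) :
    ∃ a c : ℝ, ∀ t : ℝ, energy ε (fun x => u x + t • v x) (fun x => A1 x + t * a1 x)
        (fun x => A2 x + t * a2 x)
      = a + t ^ 2 * (∫ x in unitSquare,
          (2 * (conj (dbar r A1 A2 u x) * (-I * (a1 x + r * I * a2 x) * v x)).re
            + defect r ε u A1 A2 x * ‖v x‖ ^ 2)) + t ^ 4 * c := by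
  have hσ := (contDiff_dbar hA1 hA2 hu one_add_one_eq_two.le r).continuous
  have hφ := (contDiff_defect (hu.of_le zero_le_two) hA1 hA2 (zero_add 1).le r ε).continuous
  have hv₀ := hv.continuous
  have ha1₀ := ha1.continuous
  have ha2₀ := ha2.continuous
  have hQ : Continuous fun x => -I * (a1 x + r * I * a2 x) * v x := by fun_prop
  have hsecond : Continuous fun x =>
      2 * (conj (dbar r A1 A2 u x) * (-I * (a1 x + r * I * a2 x) * v x)).re
        + defect r ε u A1 A2 x * ‖v x‖ ^ 2 :=
    ((continuous_re.comp ((continuous_conj.comp hσ).mul hQ)).const_mul 2).add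
      (hφ.mul (hv₀.norm.pow 2))
  refine ⟨∫ x in unitSquare, (‖dbar r A1 A2 u x‖ ^ 2 + ε ^ 2 * defect r ε u A1 A2 x ^ 2),
    ∫ x in unitSquare, (‖-I * (a1 x + r * I * a2 x) * v x‖ ^ 2
      + ε ^ 2 * (‖v x‖ ^ 2 / (2 * ε ^ 2)) ^ 2), fun t => ?_⟩
  rw [energy_eq_integral_dbar_defect hr hε (hu.add (hv.const_smul t))
      (hup.comp₂ hvp fun z w => z + t • w) (hA1.add (contDiff_const.mul ha1))
      (hA1p.comp₂ ha1p fun p q => p + t * q) (hA2.add (contDiff_const.mul ha2))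
      (hA2p.comp₂ ha2p fun p q => p + t * q),
    ← integral_const_mul, ← integral_const_mul, ← integral_add, ← integral_add]
  · refine integral_congr_ae (.of_forall fun x => ?_)
    dsimp only
    rw [h.dbar_add_smul (hu.differentiable two_ne_zero) (hv.differentiable two_ne_zero),
      h.defect_add_smul (hA1.differentiable one_ne_zero) (hA2.differentiable one_ne_zero)
        (ha1.differentiable one_ne_zero) (ha2.differentiable one_ne_zero)]
    rw [← ofReal_pow, norm_add_ofReal_mul_sq]
    field_simp
    ring
  all_goals exact integrableOn_unitSquare (by fun_prop)

theorem Stable.integral_nonneg_of_isLinearizedVortex (hstab : Stable ε u A1 A2)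
    (h : IsLinearizedVortex r ε u A1 A2 v a1 a2) (hr : r ^ 2 = 1) (hε : ε ≠ 0)
    (hu : ContDiff ℝ 2 u) (hup : Periodic2 u) (hA1 : ContDiff ℝ 1 A1) (hA1p : Periodic2 A1)
    (hA2 : ContDiff ℝ 1 A2) (hA2p : Periodic2 A2) (hv : ContDiff ℝ ∞ v) (hvp : Periodic2 v)
    (ha1 : ContDiff ℝ ∞ a1) (ha1p : Periodic2 a1) (ha2 : ContDiff ℝ ∞ a2) (ha2p : Periodic2 a2) :
    0 ≤ ∫ x in unitSquare,
      (2 * (conj (dbar r A1 A2 u x) * (-I * (a1 x + r * I * a2 x) * v x)).re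
        + defect r ε u A1 A2 x * ‖v x‖ ^ 2) := by
  obtain ⟨a, c, henergy⟩ := h.exists_energy_add_smul_eq hr hε hu hup hA1 hA1p hA2 hA2p
    (contDiff_infty.1 hv 2) hvp (contDiff_infty.1 ha1 1) ha1p (contDiff_infty.1 ha2 1) ha2p
  have hsecond := hstab v a1 a2 hv hvp ha1 ha1p ha2 ha2p
  rw [funext henergy, iteratedDeriv_two_even_quartic] at hsecond
  exact nonneg_of_mul_nonneg_right hsecond two_pos

lemma isLinearizedVortex_of_isYMH (hs : s ^ 2 = 1) (hε : ε ≠ 0) (hu : ContDiff ℝ 2 u)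
    (hA1 : ContDiff ℝ 2 A1) (hA2 : ContDiff ℝ 2 A2) (hYMH : IsYMH ε u A1 A2) (c : ℂ) :
    IsLinearizedVortex (-s) ε u A1 A2 (fun x => c * dbar s A1 A2 u x)
      (fun x => c.im * defect s ε u A1 A2 x) (fun x => s * c.re * defect s ε u A1 A2 x) where
  dbar_eq x := by
    have hσ : DifferentiableAt ℝ (dbar s A1 A2 u) x :=
      (contDiff_dbar (hA1.of_le one_le_two) (hA2.of_le one_le_two) hu
        one_add_one_eq_two.le s).differentiable one_ne_zero x
    have hdbar := dbar_neg_dbar_of_isYMH hs hu hYMH (hA1.of_le one_le_two)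
      (hA2.of_le one_le_two) x
    have hs' : (s : ℂ) ^ 2 = 1 := mod_cast hs
    rw [dbar, covDeriv_const_mul hσ, covDeriv_const_mul hσ]
    rw [dbar] at hdbar
    push_cast at hdbar ⊢
    linear_combination c * hdbar + defect s ε u A1 A2 x * u x *
      (c.re * I ^ 2 * hs' + c.re * I_sq - re_add_im c)
  curv_eq x := by
    have hφ : DifferentiableAt ℝ (defect s ε u A1 A2) x :=
      (contDiff_defect (hu.of_le one_le_two) hA1 hA2 one_add_one_eq_two.le s ε).differentiable
        one_ne_zero x
    obtain ⟨h₁, h₂⟩ := fderiv_defect_of_isYMH hs hu hYMH hε hA1 hA2 x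
    rw [curv, pd1, pd2, fderiv_const_mul hφ, fderiv_const_mul hφ, smul_apply, smul_apply, h₁, h₂,
      mul_left_comm, mul_re c]
    simp only [smul_eq_mul]
    linear_combination -(c.re * (conj (u x) * dbar s A1 A2 u x).re
      - c.im * (conj (u x) * dbar s A1 A2 u x).im) / ε ^ 2 * hs

lemma Stable.integral_const_mul_dbar_variation_nonneg (hstab : Stable ε u A1 A2)
    (hs : s ^ 2 = 1) (hε : ε ≠ 0) (hu : ContDiff ℝ ∞ u) (hup : Periodic2 u)
    (hA1 : ContDiff ℝ ∞ A1) (hA1p : Periodic2 A1) (hA2 : ContDiff ℝ ∞ A2) (hA2p : Periodic2 A2)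
    (hYMH : IsYMH ε u A1 A2) (c : ℂ) :
    0 ≤ ∫ x in unitSquare,
      (-2 * defect s ε u A1 A2 x * (c ^ 2 * (conj (dbar (-s) A1 A2 u x) * dbar s A1 A2 u x)).re
        + ‖c‖ ^ 2 * (defect (-s) ε u A1 A2 x * ‖dbar s A1 A2 u x‖ ^ 2)) := by
  have hσ : ContDiff ℝ ∞ (dbar s A1 A2 u) := contDiff_dbar hA1 hA2 hu le_rfl s
  have hφ : ContDiff ℝ ∞ (defect s ε u A1 A2) := contDiff_defect hu hA1 hA2 le_rfl s ε
  have hφp := hup.defect hA1p hA2p s ε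
  have hlin := isLinearizedVortex_of_isYMH hs hε (contDiff_infty.1 hu 2) (contDiff_infty.1 hA1 2)
    (contDiff_infty.1 hA2 2) hYMH c
  have hvar := hstab.integral_nonneg_of_isLinearizedVortex hlin (by rwa [neg_sq]) hε
    (contDiff_infty.1 hu 2) hup (contDiff_infty.1 hA1 1) hA1p (contDiff_infty.1 hA2 1) hA2p
    (contDiff_const.mul hσ) ((hA1p.dbar hA2p hup s).comp fun z => c * z)
    (contDiff_const.mul hφ) (hφp.comp fun p => c.im * p)
    (contDiff_const.mul hφ) (hφp.comp fun p => s * c.re * p)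
  refine hvar.trans_eq (integral_congr_ae (.of_forall fun x => ?_))
  have hs' : (s : ℂ) ^ 2 = 1 := mod_cast hs
  have hquad : conj (dbar (-s) A1 A2 u x) * (-I * ((c.im * defect s ε u A1 A2 x : ℝ)
      + (-s : ℝ) * I * (s * c.re * defect s ε u A1 A2 x : ℝ)) * (c * dbar s A1 A2 u x))
        = (-defect s ε u A1 A2 x : ℝ) *
          (c ^ 2 * (conj (dbar (-s) A1 A2 u x) * dbar s A1 A2 u x)) := by
    push_cast
    linear_combination conj (dbar (-s) A1 A2 u x) * c * dbar s A1 A2 u x * defect s ε u A1 A2 x *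
      (c.re * I ^ 2 * hs' + c.re * I_sq - re_add_im c)
  dsimp only
  rw [hquad, re_ofReal_mul, norm_mul]
  ring

theorem Stable.integral_defect_neg_mul_norm_dbar_sq_nonneg (hstab : Stable ε u A1 A2)
    (hs : s ^ 2 = 1) (hε : ε ≠ 0) (hu : ContDiff ℝ ∞ u) (hup : Periodic2 u)
    (hA1 : ContDiff ℝ ∞ A1) (hA1p : Periodic2 A1) (hA2 : ContDiff ℝ ∞ A2) (hA2p : Periodic2 A2)
    (hYMH : IsYMH ε u A1 A2) :
    0 ≤ ∫ x in unitSquare, defect (-s) ε u A1 A2 x * ‖dbar s A1 A2 u x‖ ^ 2 := by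
  have hσ (r : ℝ) : Continuous (dbar r A1 A2 u) := (contDiff_dbar hA1 hA2 hu le_rfl r).continuous
  have hφ (r : ℝ) : Continuous (defect r ε u A1 A2) :=
    (contDiff_defect hu hA1 hA2 le_rfl r ε).continuous
  have hcont (c : ℂ) : Continuous fun x =>
      -2 * defect s ε u A1 A2 x * (c ^ 2 * (conj (dbar (-s) A1 A2 u x) * dbar s A1 A2 u x)).re
        + ‖c‖ ^ 2 * (defect (-s) ε u A1 A2 x * ‖dbar s A1 A2 u x‖ ^ 2) :=
    (((hφ s).const_mul (-2)).mul (continuous_re.comp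
      (((continuous_conj.comp (hσ (-s))).mul (hσ s)).const_mul (c ^ 2)))).add
      (((hφ (-s)).mul ((hσ s).norm.pow 2)).const_mul (‖c‖ ^ 2))
  have hvar :=
    hstab.integral_const_mul_dbar_variation_nonneg hs hε hu hup hA1 hA1p hA2 hA2p hYMH
  -- The `c ^ 2` terms cancel between `c = 1` and `c = I`.
  have hsum := add_nonneg (hvar 1) (hvar I)
  rw [← integral_add (integrableOn_unitSquare (hcont 1))
    (integrableOn_unitSquare (hcont I))] at hsum
  refine nonneg_of_mul_nonneg_right (hsum.trans_eq ?_) two_pos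
  rw [← integral_const_mul]
  refine integral_congr_ae (.of_forall fun x => ?_)
  simp only [one_pow, one_mul, I_sq, neg_one_mul, neg_re, norm_one, norm_I]
  ring

end Stability

/-! ### The dichotomy -/

section Dichotomy

variable {s ε : ℝ} {u : ℝ × ℝ → ℂ} {A1 A2 : ℝ × ℝ → ℝ}

theorem defect_neg_or_vortex_of_isYMH (hs : s ^ 2 = 1) (hε : ε ≠ 0) (hu : ContDiff ℝ 2 u)
    (hup : Periodic2 u) (hA1 : ContDiff ℝ 3 A1) (hA1p : Periodic2 A1) (hA2 : ContDiff ℝ 3 A2)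
    (hA2p : Periodic2 A2) (hYMH : IsYMH ε u A1 A2) (hne : ∃ x, u x ≠ 0) :
    (∀ x, defect s ε u A1 A2 x < 0) ∨
      ∀ x, dbar s A1 A2 u x = 0 ∧ defect s ε u A1 A2 x = 0 := by
  have hlap (x : ℝ × ℝ) : ‖u x‖ ^ 2 / ε ^ 2 * defect s ε u A1 A2 x + ‖dbar s A1 A2 u x‖ ^ 2 / ε ^ 2
      = lap (defect s ε u A1 A2) x := by
    rw [lap_defect_of_isYMH hs hu hYMH hε (hA1.of_le (by norm_num)) (hA2.of_le (by norm_num))]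
    ring
  have hu₀ := hu.continuous
  refine (Periodic2.forall_neg_or_exists_eq_const (hup.defect hA1p hA2p s ε)
    (contDiff_defect hu hA1 hA2 two_add_one_eq_three.le s ε)
    (c := fun x => ‖u x‖ ^ 2 / ε ^ 2) (by fun_prop) (fun x => by positivity)
    fun x => (le_add_of_nonneg_right (by positivity)).trans_eq (hlap x)).imp_right ?_
  rintro ⟨m, hm, hconst⟩
  have hsum (x : ℝ × ℝ) : ‖u x‖ ^ 2 * m + ‖dbar s A1 A2 u x‖ ^ 2 = 0 := by
    have h := hlap x
    rw [hconst, lap_const] at h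
    field_simp at h
    rwa [mul_zero] at h
  obtain ⟨x₀, hx₀⟩ := hne
  have hm₀ : m = 0 := by
    have hux₀ : 0 < ‖u x₀‖ ^ 2 := by positivity
    nlinarith [hsum x₀, sq_nonneg ‖dbar s A1 A2 u x₀‖]
  refine fun x => ⟨?_, by rw [hconst, hm₀]⟩
  simpa [hm₀] using hsum x

theorem defect_eq_zero_of_isYMH_of_dbar_eq_zero (hs : s ^ 2 = 1) (hε : ε ≠ 0) (hu : ContDiff ℝ 2 u)
    (hup : Periodic2 u) (hA1 : ContDiff ℝ 3 A1) (hA1p : Periodic2 A1) (hA2 : ContDiff ℝ 3 A2)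
    (hA2p : Periodic2 A2) (hYMH : IsYMH ε u A1 A2) (hne : ∃ x, u x ≠ 0)
    (hσ : ∀ x, dbar s A1 A2 u x = 0) (x : ℝ × ℝ) : defect s ε u A1 A2 x = 0 := by
  obtain hneg | hvortex :=
    defect_neg_or_vortex_of_isYMH hs hε hu hup hA1 hA1p hA2 hA2p hYMH hne
  · obtain ⟨x₀, hx₀⟩ := hne
    have hφu := dbar_neg_dbar_of_isYMH hs hu hYMH (hA1.of_le (by norm_num))
      (hA2.of_le (by norm_num)) x₀
    have hdbar_zero : dbar (-s) A1 A2 (dbar s A1 A2 u) x₀ = 0 := by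
      rw [funext hσ]
      simp [dbar, covDeriv]
    rw [hdbar_zero, eq_comm, mul_eq_zero, ofReal_eq_zero] at hφu
    exact absurd (hφu.resolve_right hx₀) (hneg x₀).ne
  · exact (hvortex x).2

theorem Stable.dbar_eq_zero_of_forall_defect_neg (hstab : Stable ε u A1 A2) (hs : s ^ 2 = 1)
    (hε : ε ≠ 0) (hu : ContDiff ℝ ∞ u) (hup : Periodic2 u) (hA1 : ContDiff ℝ ∞ A1)
    (hA1p : Periodic2 A1) (hA2 : ContDiff ℝ ∞ A2) (hA2p : Periodic2 A2)
    (hYMH : IsYMH ε u A1 A2) (hneg : ∀ x, defect (-s) ε u A1 A2 x < 0) (x : ℝ × ℝ) :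
    dbar s A1 A2 u x = 0 := by
  have hintegral := hstab.integral_defect_neg_mul_norm_dbar_sq_nonneg hs hε hu hup hA1 hA1p hA2
    hA2p hYMH
  have hσ := (contDiff_dbar hA1 hA2 hu le_rfl s).continuous
  have hφ := (contDiff_defect hu hA1 hA2 le_rfl (-s) ε).continuous
  have hzero := Periodic2.eq_zero_of_integral_nonpos
    ((hup.defect hA1p hA2p (-s) ε).comp₂ (hA1p.dbar hA2p hup s) fun p z => -(p * ‖z‖ ^ 2))
    (hφ.mul (hσ.norm.pow 2)).neg
    (fun y => neg_nonneg.2 (mul_nonpos_of_nonpos_of_nonneg (hneg y).le (sq_nonneg _)))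
    (by rw [integral_neg]; exact neg_nonpos.2 hintegral) x
  simpa [(hneg x).ne] using hzero

end Dichotomy

/-- Main Theorem (flat torus, trivial bundle): a stable solution of the Yang--Mills--Higgs
equations with `u` not identically zero satisfies the vortex or anti-vortex equations. -/
theorem stable_YMH_solutions_are_vortices
    (ε : ℝ) (hε : 0 < ε) (u : ℝ × ℝ → ℂ) (A1 A2 : ℝ × ℝ → ℝ)
    (hu : ContDiff ℝ (⊤ : ℕ∞) u) (hup : Periodic2 u)
    (hA1 : ContDiff ℝ (⊤ : ℕ∞) A1) (hA1p : Periodic2 A1)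
    (hA2 : ContDiff ℝ (⊤ : ℕ∞) A2) (hA2p : Periodic2 A2)
    (hYMH : IsYMH ε u A1 A2) (hstab : Stable ε u A1 A2)
    (hne : ∃ x, u x ≠ 0) :
    (∀ x, sigP u A1 A2 x = 0 ∧ curv A1 A2 x = hfun ε u x) ∨
    (∀ x, sigM u A1 A2 x = 0 ∧ curv A1 A2 x = -hfun ε u x) := by
  have hε₀ := hε.ne'
  have hu₂ : ContDiff ℝ 2 u := contDiff_infty.1 hu 2
  have hA1₃ : ContDiff ℝ 3 A1 := contDiff_infty.1 hA1 3
  have hA2₃ : ContDiff ℝ 3 A2 := contDiff_infty.1 hA2 3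
  rw [sigP_eq_dbar_one, sigM_eq_dbar_neg_one]
  obtain hneg | hanti := defect_neg_or_vortex_of_isYMH neg_one_sq hε₀ hu₂ hup
    hA1₃ hA1p hA2₃ hA2p hYMH hne
  · left
    have hσ := hstab.dbar_eq_zero_of_forall_defect_neg (one_pow 2) hε₀ hu hup hA1 hA1p hA2 hA2p
      hYMH hneg
    have hφ := defect_eq_zero_of_isYMH_of_dbar_eq_zero (one_pow 2) hε₀ hu₂ hup hA1₃ hA1p hA2₃
      hA2p hYMH hne hσ
    exact fun x => ⟨hσ x, by simpa using curv_eq_of_defect_eq_zero (one_pow 2) (hφ x)⟩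
  · right
    exact fun x => ⟨(hanti x).1, by simpa using curv_eq_of_defect_eq_zero neg_one_sq (hanti x).2⟩
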